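/- Let p be a prime with p ≡ 1 (mod 3), and let k, n be nonnegative integers. Then (p−1)·A_3(p^k·n + (2p^k − 2)/3) + (p^k − p)·A_3(n) = (p^k − 1)·A_3(p·n + (2p − 2)/3). (Here (2p^k − 2)/3 and (2p − 2)/3 are integers since p ≡ 1 (mod 3).) -/

import Mathlib

/-- The hook length of the cell `(i, j)` in a Young diagram `μ`:
arm length + leg length + 1. -/
def YoungDiagram.hookLength (μ : YoungDiagram) (i j : ℕ) : ℕ :=
  μ.rowLen i + μ.colLen j - i - j - 1

/-- A Young diagram (equivalently, a partition) is a 3-core if none of its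
hook numbers is divisible by 3. -/
def YoungDiagram.IsThreeCore (μ : YoungDiagram) : Prop :=
  ∀ c ∈ μ.cells, ¬ (3 ∣ μ.hookLength c.1 c.2)

/-- `a3 n` is the number of 3-core partitions of `n`. -/
noncomputable def a3 (n : ℕ) : ℕ :=
  Nat.card {μ : YoungDiagram // μ.card = n ∧ μ.IsThreeCore}

/-- `A3 n` is the number of partition pairs of `n` in which each partition is a 3-core. -/
noncomputable def A3 (n : ℕ) : ℕ :=
  Nat.card {p : YoungDiagram × YoungDiagram //
    p.1.card + p.2.card = n ∧ p.1.IsThreeCore ∧ p.2.IsThreeCore}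

/-- `B3 n` is the number of partition triples of `n` in which each partition is a 3-core. -/
noncomputable def B3 (n : ℕ) : ℕ :=
  Nat.card {p : YoungDiagram × YoungDiagram × YoungDiagram //
    p.1.card + p.2.1.card + p.2.2.card = n ∧
    p.1.IsThreeCore ∧ p.2.1.IsThreeCore ∧ p.2.2.IsThreeCore}

namespace TC
open Finset

def bset (μ : YoungDiagram) : Finset ℕ :=
  (range (μ.colLen 0)).image (fun k => μ.rowLen (μ.colLen 0 - 1 - k) + k)

theorem rc (μ : YoungDiagram) (i j : ℕ) : j < μ.rowLen i ↔ i < μ.colLen j := by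
  rw [← YoungDiagram.mem_iff_lt_rowLen, YoungDiagram.mem_iff_lt_colLen]

theorem mem_bset (μ : YoungDiagram) (b : ℕ) :
    b ∈ bset μ ↔ ∃ i < μ.colLen 0, b + i + 1 = μ.rowLen i + μ.colLen 0 := by
  unfold bset
  simp only [mem_image, mem_range]
  constructor
  · rintro ⟨k, hk, rfl⟩
    exact ⟨μ.colLen 0 - 1 - k, by omega, by omega⟩
  · rintro ⟨i, hi, h⟩
    refine ⟨μ.colLen 0 - 1 - i, by omega, ?_⟩
    have : μ.colLen 0 - 1 - (μ.colLen 0 - 1 - i) = i := by omega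
    rw [this]; omega

theorem zero_notMem (μ : YoungDiagram) : 0 ∉ bset μ := by
  rw [mem_bset]
  rintro ⟨i, hi, h⟩
  have := (rc μ i 0).2 hi
  omega

theorem gap (μ : YoungDiagram) (c : ℕ) (hc : c ∉ bset μ) :
    ∃ j, c + μ.colLen j = μ.colLen 0 + j := by
  classical
  set L := μ.colLen 0 with hL
  have hex : ∃ i, μ.rowLen i + L < c + i + 1 := by
    refine ⟨L, ?_⟩
    have : ¬ 0 < μ.rowLen L := by rw [rc]; omega
    omega
  obtain ⟨i, hi, hmin⟩ : ∃ i, μ.rowLen i + L < c + i + 1 ∧ ∀ k < i, ¬ μ.rowLen k + L < c + k + 1 :=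
    ⟨Nat.find hex, Nat.find_spec hex, fun k hk => Nat.find_min hex hk⟩
  refine ⟨c + i - L, ?_⟩
  have h1 : ¬ i < μ.colLen (c + i - L) := by rw [← rc]; omega
  have h2 : i ≤ μ.colLen (c + i - L) := by
    rcases Nat.eq_zero_or_pos i with h0 | h0
    · omega
    · have h3 := hmin (i-1) (by omega)
      have h4 : i - 1 < μ.colLen (c + i - L) := by
        rw [← rc]
        by_cases hiL : i - 1 < L
        · have : ¬ (c + (i-1) + 1 = μ.rowLen (i-1) + L) := fun h =>
            hc ((mem_bset _ _).2 ⟨i-1, hiL, h⟩)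
          omega
        · have : ¬ 0 < μ.rowLen (i-1) := by rw [rc]; omega
          omega
      omega
  omega

theorem gap' (μ : YoungDiagram) (c j : ℕ) (h : c + μ.colLen j = μ.colLen 0 + j) : c ∉ bset μ := by
  rw [mem_bset]
  rintro ⟨i, hi, h'⟩
  have := rc μ i j
  by_cases hh : j < μ.rowLen i
  · have := this.1 hh; omega
  · have : ¬ i < μ.colLen j := fun h => hh (this.2 h)
    omega

theorem core_iff (μ : YoungDiagram) : μ.IsThreeCore ↔ ∀ b, b + 3 ∈ bset μ → b ∈ bset μ := by
  constructor
  · intro H b hb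
    by_contra hc
    obtain ⟨j, hj⟩ := gap μ b hc
    obtain ⟨i, hi, h⟩ := (mem_bset _ _).1 hb
    have h1 := rc μ i j
    have hm : j < μ.rowLen i := by
      by_contra hh
      have : ¬ i < μ.colLen j := fun h => hh (h1.2 h)
      omega
    have h2 := h1.1 hm
    refine H (i, j) ?_ ?_
    · rw [YoungDiagram.mem_cells, YoungDiagram.mem_iff_lt_rowLen]; exact hm
    · have : μ.hookLength i j = 3 := by unfold YoungDiagram.hookLength; omega
      simp [this]
  · rintro H ⟨i, j⟩ hc ⟨k, hk⟩
    rw [YoungDiagram.mem_cells, YoungDiagram.mem_iff_lt_rowLen] at hc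
    have h2 := (rc μ i j).1 hc
    have hLj : μ.colLen j ≤ μ.colLen 0 := μ.colLen_anti _ _ (Nat.zero_le _)
    have H' : ∀ k b, b + 3 * k ∈ bset μ → b ∈ bset μ := by
      intro k
      induction k with
      | zero => intro b hb; simpa using hb
      | succ k ih => intro b hb; exact ih b (H _ (by convert hb using 1; ring))
    unfold YoungDiagram.hookLength at hk
    simp only at hk
    refine gap' μ (μ.colLen 0 + j - μ.colLen j) j (by omega) (H' k _ ?_)
    rw [mem_bset]
    exact ⟨i, by omega, by omega⟩

theorem injOn_b (μ : YoungDiagram) :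
    StrictMonoOn (fun k => μ.rowLen (μ.colLen 0 - 1 - k) + k) (range (μ.colLen 0)) := by
  intro a _ b _ hab
  have := μ.rowLen_anti (μ.colLen 0 - 1 - b) (μ.colLen 0 - 1 - a) (by omega)
  simp only; omega

theorem card_bset (μ : YoungDiagram) : (bset μ).card = μ.colLen 0 := by
  unfold bset
  rw [card_image_of_injOn (injOn_b μ).injOn, card_range]

theorem card_eq_sum (μ : YoungDiagram) : μ.card = ∑ i ∈ range (μ.colLen 0), μ.rowLen i := by
  have : μ.cells = ((range (μ.colLen 0)).sigma (fun i => range (μ.rowLen i))).map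
      (Equiv.sigmaEquivProd ℕ ℕ).toEmbedding := by
    ext ⟨i, j⟩
    simp only [YoungDiagram.mem_cells, YoungDiagram.mem_iff_lt_rowLen, mem_map_equiv]
    simp
    intro h
    exact (rc μ i 0).1 (by omega)
  rw [YoungDiagram.card, this, card_map, card_sigma]; simp

theorem sum_bset (μ : YoungDiagram) :
    ∑ b ∈ bset μ, b = μ.card + ∑ k ∈ range (μ.colLen 0), k := by
  unfold bset
  rw [sum_image (injOn_b μ).injOn, sum_add_distrib, card_eq_sum, sum_range_reflect]

theorem bset_inj {μ ν : YoungDiagram} (h : bset μ = bset ν) : μ = ν := by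
  have hL : μ.colLen 0 = ν.colLen 0 := by rw [← card_bset, h, card_bset]
  have key : ∀ i < μ.colLen 0, μ.rowLen i = ν.rowLen i := by
    intro i hi
    have e1 := Finset.orderEmbOfFin_unique (s := bset μ) (k := μ.colLen 0) (card_bset μ)
      (f := fun k => μ.rowLen (μ.colLen 0 - 1 - k) + k)
      (fun k => mem_image_of_mem _ (mem_range.2 k.2))
      (fun a b hab => injOn_b μ (by simp) (by simp) hab)
    have e2 := Finset.orderEmbOfFin_unique (s := bset μ) (k := μ.colLen 0) (card_bset μ)
      (f := fun k => ν.rowLen (ν.colLen 0 - 1 - k) + k)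
      (fun k => by rw [h]; exact mem_image_of_mem _ (mem_range.2 (hL ▸ k.2)))
      (fun a b hab => injOn_b ν (by simp [← hL]) (by simp [← hL]) hab)
    have := congrFun (e1.trans e2.symm) ⟨μ.colLen 0 - 1 - i, by omega⟩
    simp only at this
    have h3 : μ.colLen 0 - 1 - (μ.colLen 0 - 1 - i) = i := by omega
    rw [← hL, h3] at this
    omega
  ext ⟨i, j⟩
  simp only [YoungDiagram.mem_cells, YoungDiagram.mem_iff_lt_rowLen]
  by_cases hi : i < μ.colLen 0
  · rw [key i hi]
  · have h1 : ¬ 0 < μ.rowLen i := by rw [rc]; omega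
    have h2 : ¬ 0 < ν.rowLen i := by rw [rc]; omega
    omega

theorem bset_surj (B : Finset ℕ) (h0 : 0 ∉ B) : ∃ μ, bset μ = B := by
  set L := B.card with hL
  let f := B.orderEmbOfFin hL.symm
  have hstep : ∀ (d : ℕ) (a b : Fin L), (a:ℕ) + d = b → f a + d ≤ f b := by
    intro d
    induction d with
    | zero => intro a b h; have : a = b := Fin.ext (by omega)
              simp [this]
    | succ d ih =>
      intro a b h
      have h1 := ih a ⟨a + d, by have := b.2; omega⟩ rfl
      have hlt : (a : ℕ) + d < L := by have := b.2; omega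
      have h2 : f ⟨a + d, hlt⟩ < f b := f.strictMono (by show (a : ℕ) + d < b; omega)
      omega
  have hpos : ∀ a : Fin L, (a:ℕ) + 1 ≤ f a := by
    intro a
    have hL0 : 0 < L := Nat.lt_of_le_of_lt (Nat.zero_le _) a.2
    have h1 := hstep a ⟨0, hL0⟩ a (by simp)
    have h2 : f ⟨0, hL0⟩ ∈ B := B.orderEmbOfFin_mem hL.symm _
    have h3 : f ⟨0, hL0⟩ ≠ 0 := fun h => h0 (h ▸ h2)
    omega
  let r : ℕ → ℕ := fun i => if h : i < L then f ⟨L - 1 - i, by omega⟩ - (L - 1 - i) else 0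
  have hr : ∀ i i', i ≤ i' → r i' ≤ r i := by
    intro i i' hii
    by_cases h' : i' < L
    · have h : i < L := by omega
      simp only [r, h, h', dite_true]
      have := hstep (i' - i) ⟨L - 1 - i', by omega⟩ ⟨L - 1 - i, by omega⟩ (by simp; omega)
      have := hpos ⟨L - 1 - i', by omega⟩
      simp at this
      omega
    · simp [r, h']
  let μ : YoungDiagram :=
    { cells := ((range L) ×ˢ (range (r 0))).filter (fun c => c.2 < r c.1)
      isLowerSet := by
        rintro ⟨a, b⟩ ⟨c, d⟩ hle hm
        simp only [Prod.mk_le_mk] at hle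
        simp only [coe_filter, mem_product, mem_range, Set.mem_ofPred_eq] at hm ⊢
        have := hr _ _ hle.1
        omega }
  have hmem : ∀ i j, (i, j) ∈ μ ↔ j < r i := by
    intro i j
    rw [← YoungDiagram.mem_cells]
    simp only [μ, mem_filter, mem_product, mem_range]
    constructor
    · exact fun h => h.2
    · intro h
      refine ⟨⟨?_, ?_⟩, h⟩
      · by_contra hc
        simp [r, hc] at h
      · have := hr 0 i (Nat.zero_le _); omega
  have hrow : ∀ i, μ.rowLen i = r i := by
    intro i
    apply le_antisymm
    · by_contra hc
      have := (hmem i (r i)).1 (YoungDiagram.mem_iff_lt_rowLen.2 (by omega))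
      omega
    · by_contra hc
      have := YoungDiagram.mem_iff_lt_rowLen.1 ((hmem i (μ.rowLen i)).2 (by omega))
      omega
  have hri : ∀ i, 0 < r i ↔ i < L := by
    intro i
    constructor
    · intro h; by_contra hc; simp [r, hc] at h
    · intro h; simp only [r, h, dite_true]
      have := hpos ⟨L - 1 - i, by omega⟩
      simp at this
      omega
  have hcol : μ.colLen 0 = L := by
    have : ∀ i, i < μ.colLen 0 ↔ i < L := by
      intro i; rw [← rc, hrow, hri]
    have h1 := this L
    have h2 := this (μ.colLen 0)
    omega
  refine ⟨μ, ?_⟩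
  apply Finset.eq_of_subset_of_card_le
  · intro b hb
    obtain ⟨i, hi, h⟩ := (mem_bset _ _).1 hb
    rw [hcol] at hi h
    rw [hrow] at h
    simp only [r, hi, dite_true] at h
    have h4 := hpos ⟨L - 1 - i, by omega⟩
    simp at h4
    have : b = f ⟨L - 1 - i, by omega⟩ := by omega
    rw [this]
    exact B.orderEmbOfFin_mem hL.symm _
  · rw [card_bset, hcol]

def T (u v : ℕ) : Finset ℕ :=
  (range u).image (fun k => 3 * k + 1) ∪ (range v).image (fun k => 3 * k + 2)

theorem mem_T (u v b : ℕ) : b ∈ T u v ↔ (b % 3 = 1 ∧ b / 3 < u) ∨ (b % 3 = 2 ∧ b / 3 < v) := by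
  simp only [T, mem_union, mem_image, mem_range]
  constructor
  · rintro (⟨k, hk, rfl⟩ | ⟨k, hk, rfl⟩)
    · left; omega
    · right; omega
  · rintro (h | h)
    · left; exact ⟨b / 3, h.2, by omega⟩
    · right; exact ⟨b / 3, h.2, by omega⟩

theorem T_disj (u v : ℕ) : Disjoint ((range u).image (fun k => 3 * k + 1))
    ((range v).image (fun k => 3 * k + 2)) := by
  rw [disjoint_left]
  simp only [mem_image, mem_range]
  rintro a ⟨k, _, rfl⟩ ⟨l, _, h⟩
  omega

theorem T_card (u v : ℕ) : (T u v).card = u + v := by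
  rw [T, card_union_of_disjoint (T_disj u v), card_image_of_injective, card_image_of_injective,
    card_range, card_range]
  · intro a b h; simp at h; omega
  · intro a b h; simp at h; omega

theorem T_sum (u v : ℕ) : 2 * ∑ b ∈ T u v, b + u = 3 * u ^ 2 + 3 * v ^ 2 + v := by
  rw [T, sum_union (T_disj u v), sum_image, sum_image]
  · have h1 : ∀ u : ℕ, 2 * ∑ k ∈ range u, (3 * k + 1) + u = 3 * u ^ 2 := by
      intro u
      induction u with
      | zero => simp
      | succ u ih => rw [sum_range_succ]; nlinarith
    have h2 : ∀ u : ℕ, 2 * ∑ k ∈ range u, (3 * k + 2) = 3 * u ^ 2 + u := by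
      intro u
      induction u with
      | zero => simp
      | succ u ih => rw [sum_range_succ]; nlinarith
    have := h1 u
    have := h2 v
    omega
  · intro a _ b _ h; simp at h; omega
  · intro a _ b _ h; simp at h; omega

theorem closed_T (B : Finset ℕ) (h0 : 0 ∉ B) (hB : ∀ b, b + 3 ∈ B → b ∈ B) :
    ∃ u v, B = T u v := by
  have key : ∀ r, ∃ u, ∀ k, 3 * k + r ∈ B ↔ k < u := by
    intro r
    classical
    have hex : ∃ k, 3 * k + r ∉ B := by
      obtain ⟨M, hM⟩ := B.bddAbove
      refine ⟨M + 1, fun h => ?_⟩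
      have := hM h
      omega
    refine ⟨Nat.find hex, fun k => ?_⟩
    constructor
    · intro hk
      by_contra hlt
      have : ∀ d k, 3 * (k + d) + r ∈ B → 3 * k + r ∈ B := by
        intro d
        induction d with
        | zero => intro k hk; simpa using hk
        | succ d ih => intro k hk; exact ih k (hB _ (by convert hk using 1; ring))
      refine Nat.find_spec hex (this (k - Nat.find hex) _ ?_)
      rwa [show Nat.find hex + (k - Nat.find hex) = k by omega]
    · intro hk
      have := Nat.find_min hex hk
      simpa using this
  obtain ⟨z, hz⟩ := key 0
  obtain ⟨u, hu⟩ := key 1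
  obtain ⟨v, hv⟩ := key 2
  refine ⟨u, v, ?_⟩
  ext b
  rw [mem_T]
  have hb : b % 3 = 0 ∨ b % 3 = 1 ∨ b % 3 = 2 := by omega
  rcases hb with hb | hb | hb
  · have : b ∉ B := by
      have h1 := hz (b/3)
      rw [show 3 * (b/3) + 0 = b by omega] at h1
      have h2 := hz 0
      simp only [mul_zero, zero_add, h0, false_iff] at h2
      intro h; have := h1.1 h; omega
    simp [this]; omega
  · have h1 := hu (b/3)
    rw [show 3 * (b/3) + 1 = b by omega] at h1
    rw [h1]; omega
  · have h1 := hv (b/3)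
    rw [show 3 * (b/3) + 2 = b by omega] at h1
    rw [h1]; omega

theorem T_inj {u v u' v' : ℕ} (h : T u v = T u' v') : u = u' ∧ v = v' := by
  have h1 : ∀ b, b ∈ T u v ↔ b ∈ T u' v' := fun b => by rw [h]
  simp only [mem_T] at h1
  have a1 := h1 (3 * u + 1)
  have a2 := h1 (3 * u' + 1)
  have a3 := h1 (3 * v + 2)
  have a4 := h1 (3 * v' + 2)
  omega

theorem exists_Phi (q : ℕ × ℕ) : ∃ μ, bset μ = T q.1 q.2 :=
  bset_surj _ (by rw [mem_T]; omega)

noncomputable def Phi (q : ℕ × ℕ) : YoungDiagram := (exists_Phi q).choose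

theorem Phi_spec (q : ℕ × ℕ) : bset (Phi q) = T q.1 q.2 := (exists_Phi q).choose_spec

theorem Phi_core (q : ℕ × ℕ) : (Phi q).IsThreeCore := by
  rw [core_iff, Phi_spec]
  intro b; rw [mem_T, mem_T]; omega

theorem Phi_inj {q q' : ℕ × ℕ} (h : Phi q = Phi q') : q = q' := by
  have := T_inj ((Phi_spec q).symm.trans ((congrArg bset h).trans (Phi_spec q')))
  exact Prod.ext this.1 this.2

theorem Phi_surj (μ : YoungDiagram) (h : μ.IsThreeCore) : ∃ q, Phi q = μ := by
  obtain ⟨u, v, huv⟩ := closed_T _ (zero_notMem μ) ((core_iff μ).1 h)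
  exact ⟨(u, v), bset_inj (by rw [Phi_spec, huv])⟩

theorem Phi_card (q : ℕ × ℕ) :
    ((Phi q).card : ℤ) = q.1 ^ 2 - q.1 * q.2 + q.2 ^ 2 + q.2 := by
  have h1 := sum_bset (Phi q)
  have h2 := card_bset (Phi q)
  rw [Phi_spec] at h1 h2
  rw [← h2, T_card] at h1
  have h3 := T_sum q.1 q.2
  have h4 := Finset.sum_range_id_mul_two (q.1 + q.2)
  have h5 : (q.1 + q.2) * (q.1 + q.2 - 1) + (q.1 + q.2) = (q.1 + q.2) ^ 2 := by
    cases q.1 + q.2 with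
    | zero => simp
    | succ n => simp; ring
  zify at h1 h3 h4 h5
  nlinarith

noncomputable def coreEquiv : ℕ × ℕ ≃ {μ : YoungDiagram // μ.IsThreeCore} :=
  Equiv.ofBijective (fun q => ⟨Phi q, Phi_core q⟩)
    ⟨fun _ _ h => Phi_inj (congrArg Subtype.val h),
     fun ⟨μ, h⟩ => by obtain ⟨q, hq⟩ := Phi_surj μ h; exact ⟨q, Subtype.ext hq⟩⟩

end TC
namespace TC
open Finset

noncomputable def S (m : ℕ) : Finset (ℤ × ℤ) :=
  ((Icc (-(2 * m : ℤ)) (2 * m)) ×ˢ (Icc (-(2 * m : ℤ)) (2 * m))).filter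
    (fun z => z.1 ^ 2 + z.1 * z.2 + z.2 ^ 2 = m)

theorem bd (x y : ℤ) (m : ℕ) (h : x ^ 2 + x * y + y ^ 2 = m) : -(2 * m : ℤ) ≤ x ∧ x ≤ 2 * m := by
  have h1 : x ^ 2 ≤ 2 * m := by nlinarith [sq_nonneg (x + 2 * y)]
  constructor
  · nlinarith [sq_nonneg (x + 1)]
  · nlinarith [sq_nonneg (x - 1)]

theorem mem_S (m : ℕ) (z : ℤ × ℤ) : z ∈ S m ↔ z.1 ^ 2 + z.1 * z.2 + z.2 ^ 2 = m := by
  unfold S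
  rw [mem_filter, mem_product, mem_Icc, mem_Icc]
  constructor
  · exact fun h => h.2
  · intro h
    exact ⟨⟨bd _ _ _ h, bd z.2 z.1 _ (by linarith)⟩, h⟩

theorem S_one : (S 1).card = 6 := by decide +kernel

theorem root_iff (p : ℕ) (hp : p.Prime) (h2 : p % 3 = 2) (x y : ℤ)
    (h : (p : ℤ) ∣ x ^ 2 + x * y + y ^ 2) : (p : ℤ) ∣ x ∧ (p : ℤ) ∣ y := by
  have := Fact.mk hp
  have hy : (p : ℤ) ∣ y := by
    by_contra hy
    have hy0 : (y : ZMod p) ≠ 0 := fun h => hy ((ZMod.intCast_zmod_eq_zero_iff_dvd y p).1 h)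
    have h0 : (x : ZMod p) ^ 2 + x * y + y ^ 2 = 0 := by
      have := (ZMod.intCast_zmod_eq_zero_iff_dvd _ p).2 h
      push_cast at this; exact this
    set t : ZMod p := x / y with ht
    have hx : (x : ZMod p) = t * y := by rw [ht]; field_simp
    have h1 : t ^ 2 + t + 1 = 0 := by
      rw [hx] at h0
      have : (y : ZMod p) ^ 2 * (t ^ 2 + t + 1) = 0 := by linear_combination h0
      exact (mul_eq_zero.1 this).resolve_left (pow_ne_zero 2 hy0)
    have h3 : t ^ 3 = 1 := by linear_combination (t - 1) * h1
    have ht0 : t ≠ 0 := by intro h; rw [h] at h3; simp at h3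
    have hf := ZMod.pow_card_sub_one_eq_one ht0
    have hp1 : p - 1 = 3 * ((p - 2) / 3) + 1 := by omega
    rw [hp1, pow_succ, pow_mul, h3, one_pow, one_mul] at hf
    rw [hf] at h1
    have : ((3 : ℕ) : ZMod p) = 0 := by push_cast; linear_combination h1
    rw [ZMod.natCast_eq_zero_iff] at this
    have := (Nat.prime_dvd_prime_iff_eq hp Nat.prime_three).1 this
    omega
  refine ⟨?_, hy⟩
  have : (p : ℤ) ∣ x ^ 2 := by
    have h1 : x ^ 2 = (x ^ 2 + x * y + y ^ 2) - y * (x + y) := by ring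
    rw [h1]; exact dvd_sub h (hy.mul_right _)
  exact (Nat.prime_iff_prime_int.1 hp).dvd_of_dvd_pow this

theorem exists_rep (p : ℕ) (hp : p.Prime) (h1 : p % 3 = 1) :
    ∃ a b : ℤ, a ^ 2 + a * b + b ^ 2 = p := by
  have := Fact.mk hp
  have : Fact (Nat.Prime 3) := ⟨Nat.prime_three⟩
  obtain ⟨g, hg⟩ := exists_prime_orderOf_dvd_card (G := (ZMod p)ˣ) 3
    (by rw [ZMod.card_units]; omega)
  have hg3 : (g : ZMod p) ^ 3 = 1 := by
    have := pow_orderOf_eq_one g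
    rw [hg] at this
    rw [← Units.val_pow_eq_pow_val, this, Units.val_one]
  have hg1 : (g : ZMod p) ≠ 1 := by
    intro h
    have : g = 1 := Units.ext h
    rw [this] at hg; simp at hg
  set t : ZMod p := (g : ZMod p) with ht
  have hroot : t ^ 2 + t + 1 = 0 := by
    have : (t - 1) * (t ^ 2 + t + 1) = 0 := by linear_combination hg3
    exact (mul_eq_zero.1 this).resolve_left (sub_ne_zero.2 hg1)
  set s := Nat.sqrt p with hs
  have hs1 : p < (s + 1) * (s + 1) := Nat.lt_succ_sqrt p
  have hs2 : s * s ≤ p := Nat.sqrt_le p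
  have hs3 : s * s ≠ p := by
    intro h
    rw [← h] at hp
    have := Nat.prime_mul_iff.1 hp
    rcases this with ⟨h, h'⟩ | ⟨h, h'⟩ <;> exact h.ne_one h'
  obtain ⟨z, hz, w, hw, hne, heq⟩ := Finset.exists_ne_map_eq_of_card_lt_of_maps_to
    (s := (range (s + 1)) ×ˢ (range (s + 1))) (t := (univ : Finset (ZMod p)))
    (f := fun z => (z.1 : ZMod p) - t * z.2)
    (by rw [card_product, card_range, card_univ, ZMod.card]; exact hs1) (fun _ _ => by simp)
  simp only [mem_product, mem_range] at hz hw
  set x : ℤ := (z.1 : ℤ) - w.1 with hx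
  set y : ℤ := (z.2 : ℤ) - w.2 with hy
  have hdv : (p : ℤ) ∣ x ^ 2 + x * y + y ^ 2 := by
    rw [← ZMod.intCast_zmod_eq_zero_iff_dvd]
    have hxy : (x : ZMod p) = t * y := by
      rw [hx, hy]; push_cast; linear_combination heq
    push_cast
    rw [hxy]
    linear_combination (y : ZMod p) ^ 2 * hroot
  have hxs : x ^ 2 ≤ s * s := by
    have : |x| ≤ s := by rw [abs_le]; omega
    nlinarith [sq_abs x, abs_nonneg x]
  have hys : y ^ 2 ≤ s * s := by
    have : |y| ≤ s := by rw [abs_le]; omega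
    nlinarith [sq_abs y, abs_nonneg y]
  have hsp : (s * s : ℤ) < p := by
    have : s * s < p := by omega
    exact_mod_cast this
  have hub : x ^ 2 + x * y + y ^ 2 < 3 * p := by nlinarith [sq_nonneg (x - y)]
  have hlb : 0 < x ^ 2 + x * y + y ^ 2 := by
    by_contra hc
    have hy0 : y ^ 2 ≤ 0 := by nlinarith [sq_nonneg (2 * x + y)]
    have hx0 : x ^ 2 ≤ 0 := by nlinarith [sq_nonneg (2 * y + x)]
    have hy1 : y = 0 := by nlinarith
    have hx1 : x = 0 := by nlinarith
    exact hne (Prod.ext (by clear_value x y; subst hy1 hx1; omega) (by clear_value x y; subst hy1 hx1; omega))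
  obtain ⟨c, hc⟩ := hdv
  have hp0 : (0 : ℤ) < p := by exact_mod_cast hp.pos
  have hc1 : 0 < c := by
    rw [hc] at hlb; exact (mul_pos_iff_of_pos_left hp0).1 hlb
  have hc2 : c < 3 := by
    rw [hc] at hub; exact lt_of_mul_lt_mul_left (a := (p : ℤ)) (by linarith) hp0.le
  have hc3 : c = 1 ∨ c = 2 := by omega
  rcases hc3 with rfl | rfl
  · exact ⟨x, y, by linarith⟩
  · exfalso
    obtain ⟨⟨x', hx'⟩, ⟨y', hy'⟩⟩ := root_iff 2 Nat.prime_two (by norm_num) x y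
      ⟨p, by push_cast; linarith⟩
    push_cast at hx' hy'
    rw [hx', hy'] at hc
    have : (2 : ℤ) ∣ p := ⟨x' ^ 2 + x' * y' + y' ^ 2, by linarith⟩
    have h2 : 2 ∣ p := by exact_mod_cast this
    have := (Nat.prime_dvd_prime_iff_eq Nat.prime_two hp).1 h2
    omega

/-- multiplication by a + b ζ -/
def M (a b : ℤ) (z : ℤ × ℤ) : ℤ × ℤ := (a * z.1 - b * z.2, b * z.1 + (a + b) * z.2)

theorem M_norm (a b : ℤ) (z : ℤ × ℤ) :
    (M a b z).1 ^ 2 + (M a b z).1 * (M a b z).2 + (M a b z).2 ^ 2 =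
    (a ^ 2 + a * b + b ^ 2) * (z.1 ^ 2 + z.1 * z.2 + z.2 ^ 2) := by
  simp only [M]; ring

theorem M_conj (a b : ℤ) (z : ℤ × ℤ) : M (a + b) (-b) (M a b z) =
    ((a ^ 2 + a * b + b ^ 2) * z.1, (a ^ 2 + a * b + b ^ 2) * z.2) := by
  simp only [M]; ext <;> ring_nf

theorem M_conj' (a b : ℤ) (z : ℤ × ℤ) : M a b (M (a + b) (-b) z) =
    ((a ^ 2 + a * b + b ^ 2) * z.1, (a ^ 2 + a * b + b ^ 2) * z.2) := by
  simp only [M]; ext <;> ring_nf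

theorem M_inj (a b : ℤ) (h : a ^ 2 + a * b + b ^ 2 ≠ 0) : Function.Injective (M a b) := by
  intro z w hzw
  have := congrArg (M (a + b) (-b)) hzw
  rw [M_conj, M_conj] at this
  simp only [Prod.mk.injEq, mul_eq_mul_left_iff, h, or_false] at this
  exact Prod.ext this.1 this.2

theorem M_div (p m : ℕ) (hp : p.Prime) (a b : ℤ) (hab : a ^ 2 + a * b + b ^ 2 = p)
    (z : ℤ × ℤ) (hz : z ∈ S (p * m)) :
    z ∈ (S m).image (M (a + b) (-b)) ↔ (p : ℤ) ∣ b * z.1 + (a + b) * z.2 := by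
  have hp0 : (p : ℤ) ≠ 0 := by exact_mod_cast hp.ne_zero
  rw [mem_image]
  constructor
  · rintro ⟨w, hw, rfl⟩
    have := M_conj' a b w
    have h2 := congrArg Prod.snd this
    rw [hab] at h2
    simp only [M] at h2 ⊢
    exact ⟨w.2, h2⟩
  · rintro ⟨v, hv⟩
    rw [mem_S] at hz
    have hn := M_norm a b z
    rw [hab, hz] at hn
    have h1 : (p : ℤ) ∣ (M a b z).1 := by
      apply (Nat.prime_iff_prime_int.1 hp).dvd_of_dvd_pow (n := 2)
      have e : (M a b z).2 = p * v := hv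
      refine ⟨(p * m : ℕ) - v * ((M a b z).1 + (M a b z).2), ?_⟩
      rw [e] at hn ⊢
      linear_combination hn
    obtain ⟨u, hu⟩ := h1
    have e : M a b z = (p * u, p * v) := Prod.ext hu hv
    have hc := M_conj a b z
    rw [hab, e] at hc
    refine ⟨(u, v), ?_, ?_⟩
    · rw [mem_S]
      rw [e] at hn
      simp only at hn ⊢
      push_cast at hn
      have : (p : ℤ) ^ 2 * (u ^ 2 + u * v + v ^ 2) = (p : ℤ) ^ 2 * m := by linear_combination hn
      exact mul_left_cancel₀ (pow_ne_zero 2 hp0) this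
    · simp only [M, Prod.mk.injEq] at hc ⊢
      refine Prod.ext (mul_left_cancel₀ hp0 ?_) (mul_left_cancel₀ hp0 ?_)
      · simp only; linear_combination hc.1
      · simp only; linear_combination hc.2

/-- elements of norm p*m divisible by p -/
noncomputable def Sp (p m : ℕ) : Finset (ℤ × ℤ) := (S (p * m)).filter (fun z => (p : ℤ) ∣ z.1 ∧ (p : ℤ) ∣ z.2)

theorem Sp_card_dvd (p m : ℕ) (hp : p.Prime) : (Sp p (p * m)).card = (S m).card := by
  have hp0 : (p : ℤ) ≠ 0 := by exact_mod_cast hp.ne_zero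
  symm
  apply card_bij (fun z _ => ((p : ℤ) * z.1, (p : ℤ) * z.2))
  · intro z hz
    rw [mem_S] at hz
    rw [Sp, mem_filter, mem_S]
    refine ⟨?_, Dvd.intro _ rfl, Dvd.intro _ rfl⟩
    push_cast
    rw [← hz]; ring
  · intro z _ w _ h
    simp only [Prod.mk.injEq, mul_eq_mul_left_iff, hp0, or_false] at h
    exact Prod.ext h.1 h.2
  · rintro ⟨x, y⟩ hz
    rw [Sp, mem_filter, mem_S] at hz
    obtain ⟨hz, ⟨u, hu⟩, ⟨v, hv⟩⟩ := hz
    simp only at hz hu hv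
    subst hu hv
    refine ⟨(u, v), ?_, rfl⟩
    rw [mem_S]
    push_cast at hz
    have : (p : ℤ) ^ 2 * (u ^ 2 + u * v + v ^ 2) = (p : ℤ) ^ 2 * m := by linear_combination hz
    exact mul_left_cancel₀ (pow_ne_zero 2 hp0) this

theorem Sp_card_ndvd (p m : ℕ) (hp : p.Prime) (h : ¬ p ∣ m) : (Sp p m).card = 0 := by
  have hp0 : (p : ℤ) ≠ 0 := by exact_mod_cast hp.ne_zero
  rw [card_eq_zero, eq_empty_iff_forall_notMem]
  rintro ⟨x, y⟩ hz
  rw [Sp, mem_filter, mem_S] at hz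
  obtain ⟨hz, ⟨u, hu⟩, ⟨v, hv⟩⟩ := hz
  simp only at hz hu hv
  subst hu hv
  apply h
  have : (p : ℤ) ∣ m := ⟨u ^ 2 + u * v + v ^ 2, mul_left_cancel₀ hp0 (by
    push_cast at hz; linear_combination -hz)⟩
  exact_mod_cast this

theorem S_two (p m : ℕ) (hp : p.Prime) (h2 : p % 3 = 2) : (S (p * m)).card = (Sp p m).card := by
  rw [Sp, filter_true_of_mem]
  intro z hz
  rw [mem_S] at hz
  exact root_iff p hp h2 _ _ ⟨m, by rw [hz]; push_cast; ring⟩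

theorem S_rec (p m : ℕ) (hp : p.Prime) (h1 : p % 3 = 1) :
    (S (p * m)).card + (Sp p m).card = 2 * (S m).card := by
  obtain ⟨a, b, hab⟩ := exists_rep p hp h1
  have hp0 : (p : ℤ) ≠ 0 := by exact_mod_cast hp.ne_zero
  have hpp := Nat.prime_iff_prime_int.1 hp
  have hab' : (a + b) ^ 2 + (a + b) * (-b) + (-b) ^ 2 = p := by rw [← hab]; ring
  have D1 := M_div p m hp a b hab
  have D2 := M_div p m hp (a + b) (-b) hab'
  simp only [add_neg_cancel_right, neg_neg] at D2
  have sub : ∀ a b : ℤ, a ^ 2 + a * b + b ^ 2 = p → (S m).image (M a b) ⊆ S (p * m) := by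
    intro a b h z hz
    obtain ⟨w, hw, rfl⟩ := mem_image.1 hz
    rw [mem_S] at hw ⊢
    rw [M_norm, h, hw]; push_cast; ring
  have hU : (S m).image (M (a + b) (-b)) ∪ (S m).image (M a b) = S (p * m) := by
    apply Subset.antisymm
    · exact union_subset (sub _ _ hab') (sub _ _ hab)
    · intro z hz
      rw [mem_union, D1 z hz, D2 z hz]
      apply hpp.dvd_or_dvd
      rw [mem_S] at hz
      push_cast at hz
      refine ⟨a * z.1 * z.2 * 0 - b ^ 2 * m + z.2 ^ 2, ?_⟩
      linear_combination (-b ^ 2) * hz + z.2 ^ 2 * hab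
  have hI : (S m).image (M (a + b) (-b)) ∩ (S m).image (M a b) = Sp p m := by
    ext z
    rw [mem_inter, Sp, mem_filter]
    constructor
    · rintro ⟨h1', h2'⟩
      have hz := sub _ _ hab h2'
      rw [D1 z hz] at h1'
      rw [D2 z hz] at h2'
      refine ⟨hz, ?_⟩
      have hpb : ¬ (p : ℤ) ∣ b := by
        intro hb
        have ha : (p : ℤ) ∣ a := by
          apply hpp.dvd_of_dvd_pow (n := 2)
          have : a ^ 2 = p - b * (a + b) := by linear_combination hab
          rw [this]; exact dvd_sub dvd_rfl (hb.mul_right _)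
        obtain ⟨a', rfl⟩ := ha
        obtain ⟨b', rfl⟩ := hb
        have : (p : ℤ) * (a' ^ 2 + a' * b' + b' ^ 2) = 1 :=
          mul_left_cancel₀ hp0 (by linear_combination hab)
        exact hpp.not_dvd_one ⟨_, this.symm⟩
      have h3 : (p : ℤ) ∣ (2 * a + b) * z.2 := by
        have e : (2 * a + b) * z.2 = b * z.1 + (a + b) * z.2 + (-b * z.1 + a * z.2) := by ring
        rw [e]; exact dvd_add h1' h2'
      have hy : (p : ℤ) ∣ z.2 := by
        refine (hpp.dvd_or_dvd h3).resolve_left fun h => ?_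
        have : (p : ℤ) ∣ 3 * b ^ 2 := by
          have e : 3 * b ^ 2 = 4 * p - (2 * a + b) * (2 * a + b) := by linear_combination 4 * hab
          rw [e]; exact dvd_sub (Dvd.intro_left _ rfl) (h.mul_right _)
        rcases hpp.dvd_or_dvd this with h | h
        · have h3 : p ∣ 3 := by exact_mod_cast h
          have := (Nat.prime_dvd_prime_iff_eq hp Nat.prime_three).1 h3
          omega
        · exact hpb (hpp.dvd_of_dvd_pow h)
      refine ⟨?_, hy⟩
      have : (p : ℤ) ∣ b * z.1 := (dvd_add_left (hy.mul_left _)).1 h1'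
      exact (hpp.dvd_or_dvd this).resolve_left hpb
    · rintro ⟨hz, hx, hy⟩
      rw [D1 z hz, D2 z hz]
      exact ⟨dvd_add (hx.mul_left _) (hy.mul_left _), dvd_add (hx.mul_left _) (hy.mul_left _)⟩
  have := card_union_add_card_inter ((S m).image (M (a + b) (-b))) ((S m).image (M a b))
  rw [hU, hI, card_image_of_injective _ (M_inj _ _ (by rw [hab']; exact hp0)),
    card_image_of_injective _ (M_inj _ _ (by rw [hab]; exact hp0))] at this
  omega

end TC
namespace TC
open Finset

def chi (d : ℕ) : ℤ := if d % 3 = 1 then 1 else if d % 3 = 2 then -1 else 0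

theorem chi_mul (a b : ℕ) : chi (a * b) = chi a * chi b := by
  unfold chi
  rw [Nat.mul_mod]
  have ha : a % 3 = 0 ∨ a % 3 = 1 ∨ a % 3 = 2 := by omega
  have hb : b % 3 = 0 ∨ b % 3 = 1 ∨ b % 3 = 2 := by omega
  rcases ha with h | h | h <;> rcases hb with h' | h' | h' <;> simp [h, h']

def D (m : ℕ) : ℤ := ∑ d ∈ m.divisors, chi d

theorem div_union (p m : ℕ) (hp : p.Prime) (hm : m ≠ 0) :
    (p * m).divisors = m.divisors ∪ m.divisors.image (fun d => p * d) := by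
  ext d
  simp only [Nat.mem_divisors, mem_union, mem_image]
  constructor
  · rintro ⟨h, _⟩
    by_cases hd : p ∣ d
    · right
      obtain ⟨e, rfl⟩ := hd
      exact ⟨e, ⟨Nat.dvd_of_mul_dvd_mul_left hp.pos h, hm⟩, rfl⟩
    · left
      exact ⟨((Nat.Prime.coprime_iff_not_dvd hp).2 hd).symm.dvd_of_dvd_mul_left h, hm⟩
  · rintro (⟨h, _⟩ | ⟨e, ⟨h, _⟩, rfl⟩)
    · exact ⟨h.mul_left _, mul_ne_zero hp.ne_zero hm⟩
    · exact ⟨Nat.mul_dvd_mul_left _ h, mul_ne_zero hp.ne_zero hm⟩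

theorem D_image (p m : ℕ) (hp : p.Prime) :
    ∑ d ∈ m.divisors.image (fun d => p * d), chi d = chi p * D m := by
  rw [sum_image (fun a _ b _ h => Nat.eq_of_mul_eq_mul_left hp.pos h), D, mul_sum]
  exact sum_congr rfl fun d _ => chi_mul _ _

theorem D_ndvd (p m : ℕ) (hp : p.Prime) (hm : m ≠ 0) (h : ¬ p ∣ m) :
    D (p * m) = (1 + chi p) * D m := by
  have hd : Disjoint m.divisors (m.divisors.image (fun d => p * d)) := by
    rw [disjoint_left]
    intro d hd hd'
    obtain ⟨e, he, rfl⟩ := mem_image.1 hd'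
    exact h ((Dvd.intro _ rfl).trans (Nat.dvd_of_mem_divisors hd))
  have : D (p * m) = D m + ∑ d ∈ m.divisors.image (fun d => p * d), chi d := by
    rw [D, div_union p m hp hm, sum_union hd, D]
  rw [this, D_image p m hp]; ring

theorem D_dvd (p m : ℕ) (hp : p.Prime) (hm : m ≠ 0) :
    D (p * (p * m)) = (1 + chi p) * D (p * m) - chi p * D m := by
  have hpm : p * m ≠ 0 := mul_ne_zero hp.ne_zero hm
  have hI : (p * m).divisors ∩ (p * m).divisors.image (fun d => p * d) =
      m.divisors.image (fun d => p * d) := by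
    ext d
    simp only [mem_inter, mem_image, Nat.mem_divisors]
    constructor
    · rintro ⟨⟨h, _⟩, e, _, rfl⟩
      exact ⟨e, ⟨Nat.dvd_of_mul_dvd_mul_left hp.pos h, hm⟩, rfl⟩
    · rintro ⟨e, ⟨h, _⟩, rfl⟩
      exact ⟨⟨Nat.mul_dvd_mul_left _ h, hpm⟩, e, ⟨h.mul_left _, hpm⟩, rfl⟩
  have := sum_union_inter (f := chi) (s₁ := (p * m).divisors)
    (s₂ := (p * m).divisors.image (fun d => p * d))
  rw [hI, ← div_union p _ hp hpm, D_image _ _ hp, D_image _ _ hp] at this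
  change D (p * (p * m)) + _ = D (p * m) + _ at this
  linarith

theorem chi_one {p : ℕ} (h : p % 3 = 1) : chi p = 1 := by simp [chi, h]
theorem chi_two {p : ℕ} (h : p % 3 = 2) : chi p = -1 := by simp [chi, h]

theorem S_eq_D (m : ℕ) (h : m % 3 ≠ 0) : ((S m).card : ℤ) = 6 * D m := by
  induction m using Nat.strong_induction_on with
  | _ m ih =>
  by_cases h1 : m = 1
  · subst h1; rw [S_one]; simp [D, chi]
  have hp := Nat.minFac_prime h1
  obtain ⟨m', hm'⟩ := Nat.minFac_dvd m
  set p := m.minFac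
  clear_value p
  have hm0 : m' ≠ 0 := by rintro rfl; simp at hm'; omega
  have hlt : m' < m := by rw [hm']; nlinarith [hp.two_le, Nat.pos_of_ne_zero hm0]
  have hm3 : m' % 3 ≠ 0 := by intro h3; rw [hm', Nat.mul_mod, h3] at h; simp at h
  have hp3 : p % 3 = 1 ∨ p % 3 = 2 := by
    have : p % 3 ≠ 0 := by intro h3; rw [hm', Nat.mul_mod, h3] at h; simp at h
    omega
  have ih1 := ih m' hlt hm3
  by_cases hd : p ∣ m'
  · obtain ⟨m2, rfl⟩ := hd
    have hm20 : m2 ≠ 0 := by rintro rfl; simp at hm0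
    have hlt2 : m2 < m := by
      have : m2 ≤ p * m2 := Nat.le_mul_of_pos_left _ hp.pos
      omega
    have ih2 := ih m2 hlt2 (by intro h3; rw [Nat.mul_mod, h3] at hm3; simp at hm3)
    have hs := Sp_card_dvd p m2 hp
    rw [hm', D_dvd p m2 hp hm20]
    rcases hp3 with h3 | h3
    · have := S_rec p (p * m2) hp h3
      rw [chi_one h3]
      zify at this hs
      linarith
    · have := S_two p (p * m2) hp h3
      rw [chi_two h3, this, hs]
      linarith
  · have hs := Sp_card_ndvd p m' hp hd
    rw [hm', D_ndvd p m' hp hm0 hd]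
    rcases hp3 with h3 | h3
    · have := S_rec p m' hp h3
      rw [chi_one h3]
      zify at this hs
      linarith
    · have := S_two p m' hp h3
      rw [chi_two h3, this, hs]
      simp

noncomputable def Qs (n : ℕ) : Finset (ℕ × ℕ) :=
  ((range (2 * n + 1)) ×ˢ (range (2 * n + 1))).filter
    (fun q => (q.1 : ℤ) ^ 2 - q.1 * q.2 + q.2 ^ 2 + q.2 = n)

theorem mem_Qs (n : ℕ) (q : ℕ × ℕ) :
    q ∈ Qs n ↔ (q.1 : ℤ) ^ 2 - q.1 * q.2 + q.2 ^ 2 + q.2 = n := by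
  unfold Qs
  rw [mem_filter, mem_product, mem_range, mem_range]
  constructor
  · exact fun h => h.2
  · intro h
    refine ⟨⟨?_, ?_⟩, h⟩
    · have h1 : (q.1 : ℤ) ^ 2 ≤ 2 * n := by nlinarith [sq_nonneg ((q.1 : ℤ) - 2 * q.2)]
      have : (q.1 : ℤ) ≤ 2 * n := by
        have : (q.1 : ℤ) ≤ (q.1 : ℤ) ^ 2 := by exact_mod_cast Nat.le_self_pow (by norm_num) _
        linarith
      omega
    · have h1 : (q.2 : ℤ) ≤ n := by nlinarith [sq_nonneg (2 * (q.1 : ℤ) - q.2), sq_nonneg (q.2 : ℤ)]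
      omega

noncomputable def S1 (m : ℕ) : Finset (ℤ × ℤ) := (S m).filter (fun z => (z.1 - z.2) % 3 = 1)
noncomputable def S2 (m : ℕ) : Finset (ℤ × ℤ) :=
  (S1 m).filter (fun z => 0 < 2 * z.1 + z.2 ∧ 0 < z.1 + 2 * z.2)

theorem norm_mod (n : ℕ) (z : ℤ × ℤ) (hz : z ∈ S (3 * n + 1)) : (z.1 - z.2) % 3 ≠ 0 := by
  intro h
  rw [mem_S] at hz
  obtain ⟨k, hk⟩ := Int.dvd_of_emod_eq_zero h
  have hx : z.1 = z.2 + 3 * k := by linarith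
  rw [hx] at hz
  have : 3 * (z.2 ^ 2 + 3 * k * z.2 + 3 * k ^ 2) = 3 * (n : ℤ) + 1 := by
    push_cast at hz; linarith
  omega

theorem S_S1 (n : ℕ) : (S (3 * n + 1)).card = 2 * (S1 (3 * n + 1)).card := by
  have := card_filter_add_card_filter_not (s := S (3 * n + 1)) (fun z => (z.1 - z.2) % 3 = 1)
  have h2 : ((S (3 * n + 1)).filter (fun z => ¬ (z.1 - z.2) % 3 = 1)).card
      = (S1 (3 * n + 1)).card := by
    apply card_nbij' (fun z => (-z.1, -z.2)) (fun z => (-z.1, -z.2))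
    · intro z hz
      simp only [S1, coe_filter, Set.mem_ofPred_eq] at hz ⊢
      have := norm_mod n z hz.1
      refine ⟨?_, by omega⟩
      have := hz.1
      rw [mem_S] at this ⊢
      rw [← this]; ring
    · intro z hz
      simp only [S1, coe_filter, Set.mem_ofPred_eq] at hz ⊢
      refine ⟨?_, by omega⟩
      have := hz.1
      rw [mem_S] at this ⊢
      rw [← this]; ring
    · intro z _; simp
    · intro z _; simp
  rw [h2] at this
  unfold S1 at *
  omega

theorem S1_S2 (n : ℕ) : (S1 (3 * n + 1)).card = 3 * (S2 (3 * n + 1)).card := by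
  set m := 3 * n + 1 with hm
  let A := (S1 m).filter (fun z => z.1 + 2 * z.2 < 0 ∧ z.2 < z.1)
  let B := (S1 m).filter (fun z => 2 * z.1 + z.2 < 0 ∧ z.1 < z.2)
  have hA : (S2 m).card = A.card := by
    apply card_nbij' (fun z => (z.2, -z.1 - z.2)) (fun z => (- z.1 - z.2, z.1))
    · intro z hz
      simp only [A, S1, S2, coe_filter, mem_filter, mem_S, Set.mem_ofPred_eq] at hz ⊢
      refine ⟨⟨?_, by omega⟩, by omega⟩
      rw [← hz.1.1]; ring
    · intro z hz
      simp only [A, S1, S2, coe_filter, mem_filter, mem_S, Set.mem_ofPred_eq] at hz ⊢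
      refine ⟨⟨?_, by omega⟩, by omega⟩
      rw [← hz.1.1]; ring
    · intro z _; refine Prod.ext ?_ ?_ <;> (simp only <;> ring)
    · intro z _; refine Prod.ext ?_ ?_ <;> (simp only <;> ring)
  have hB : (S2 m).card = B.card := by
    apply card_nbij' (fun z => (- z.1 - z.2, z.1)) (fun z => (z.2, -z.1 - z.2))
    · intro z hz
      simp only [B, S1, S2, coe_filter, mem_filter, mem_S, Set.mem_ofPred_eq] at hz ⊢
      refine ⟨⟨?_, by omega⟩, by omega⟩
      rw [← hz.1.1]; ring
    · intro z hz
      simp only [B, S1, S2, coe_filter, mem_filter, mem_S, Set.mem_ofPred_eq] at hz ⊢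
      refine ⟨⟨?_, by omega⟩, by omega⟩
      rw [← hz.1.1]; ring
    · intro z _; refine Prod.ext ?_ ?_ <;> (simp only <;> ring)
    · intro z _; refine Prod.ext ?_ ?_ <;> (simp only <;> ring)
  have hU : S1 m = S2 m ∪ (A ∪ B) := by
    ext z
    simp only [mem_union, A, B, S2, mem_filter]
    constructor
    · intro hz
      have := hz
      rw [S1, mem_filter] at this
      have := this.2
      by_cases h : 0 < 2 * z.1 + z.2 ∧ 0 < z.1 + 2 * z.2
      · left; exact ⟨hz, h⟩
      · right
        by_cases h' : z.1 + 2 * z.2 < 0 ∧ z.2 < z.1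
        · left; exact ⟨hz, h'⟩
        · right; exact ⟨hz, by omega⟩
    · tauto
  have hd1 : Disjoint (S2 m) (A ∪ B) := by
    rw [disjoint_left]
    intro z h1 h2
    simp only [mem_union, A, B, S2, mem_filter] at h1 h2
    omega
  have hd2 : Disjoint A B := by
    rw [disjoint_left]
    intro z h1 h2
    simp only [A, B, mem_filter] at h1 h2
    omega
  rw [hU, card_union_of_disjoint hd1, card_union_of_disjoint hd2]
  omega

theorem S2_Qs (n : ℕ) : (S2 (3 * n + 1)).card = (Qs n).card := by
  symm
  apply card_bij (fun q _ => ((2 * q.2 - q.1 + 1 : ℤ), (2 * q.1 - q.2 : ℤ)))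
  · intro q hq
    rw [mem_Qs] at hq
    simp only [S1, S2, mem_filter, mem_S]
    refine ⟨⟨?_, by omega⟩, by omega, by omega⟩
    push_cast
    rw [← hq]; ring
  · intro q _ q' _ h
    simp only [Prod.mk.injEq] at h
    exact Prod.ext (by omega) (by omega)
  · intro z hz
    simp only [S1, S2, mem_filter, mem_S] at hz
    obtain ⟨⟨h1, h2⟩, h3, h4⟩ := hz
    obtain ⟨u, hu⟩ : ∃ u : ℕ, z.1 + 2 * z.2 = 3 * u + 1 :=
      ⟨((z.1 + 2 * z.2) / 3).toNat, by omega⟩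
    obtain ⟨v, hv⟩ : ∃ v : ℕ, 2 * z.1 + z.2 = 3 * v + 2 :=
      ⟨((2 * z.1 + z.2) / 3).toNat, by omega⟩
    have hx : z.1 = 2 * v - u + 1 := by omega
    have hy : z.2 = 2 * u - v := by omega
    refine ⟨(u, v), ?_, ?_⟩
    · rw [mem_Qs]
      rw [hx, hy] at h1
      push_cast at h1
      simp only
      linarith
    · exact Prod.ext hx.symm hy.symm

theorem Qs_card (n : ℕ) : ((Qs n).card : ℤ) = D (3 * n + 1) := by
  have h1 := S_eq_D (3 * n + 1) (by omega)
  have h2 := S_S1 n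
  have h3 := S1_S2 n
  have h4 := S2_Qs n
  omega

theorem A3_eq (n : ℕ) : A3 n = ∑ ij ∈ antidiagonal n, (Qs ij.1).card * (Qs ij.2).card := by
  let P := (antidiagonal n).sigma (fun ij => Qs ij.1 ×ˢ Qs ij.2)
  have hP : P.card = ∑ ij ∈ antidiagonal n, (Qs ij.1).card * (Qs ij.2).card := by
    simp [P, card_sigma, card_product]
  have hQ : ∀ m q, q ∈ Qs m ↔ (Phi q).card = m := by
    intro m q
    rw [mem_Qs, ← Phi_card]; exact Nat.cast_inj
  rw [← hP, A3, ← Fintype.card_coe, ← Nat.card_eq_fintype_card]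
  symm
  apply Nat.card_eq_of_bijective (fun x : P => ⟨(Phi x.1.2.1, Phi x.1.2.2), by
    obtain ⟨⟨⟨i, j⟩, q, q'⟩, hx⟩ := x
    simp only [P, mem_sigma, mem_product, hQ, Finset.HasAntidiagonal.mem_antidiagonal] at hx
    simp only
    exact ⟨by omega, Phi_core _, Phi_core _⟩⟩)
  constructor
  · rintro ⟨⟨⟨i, j⟩, q, q'⟩, hx⟩ ⟨⟨⟨i1, j1⟩, q1, q1'⟩, hx1⟩ h
    simp only [P, mem_sigma, mem_product, hQ, Finset.HasAntidiagonal.mem_antidiagonal] at hx hx1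
    simp only [Subtype.mk.injEq, Prod.mk.injEq] at h
    have e1 := Phi_inj h.1
    have e2 := Phi_inj h.2
    subst e1 e2
    obtain ⟨_, rfl, rfl⟩ := hx
    obtain ⟨_, rfl, rfl⟩ := hx1
    rfl
  · rintro ⟨⟨μ, ν⟩, h1, h2, h3⟩
    obtain ⟨q, rfl⟩ := Phi_surj _ h2
    obtain ⟨q', rfl⟩ := Phi_surj _ h3
    refine ⟨⟨⟨((Phi q).card, (Phi q').card), q, q'⟩, ?_⟩, rfl⟩
    simp only [P, mem_sigma, mem_product, hQ, Finset.HasAntidiagonal.mem_antidiagonal]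
    exact ⟨h1, trivial, trivial⟩

end TC
namespace TC
open Finset

def Quad (n : ℕ) : Finset (ℕ × ℕ × ℕ × ℕ) :=
  ((Icc 1 n) ×ˢ (Icc 1 n) ×ˢ (Icc 1 n) ×ˢ (Icc 1 n)).filter
    (fun t => t.1 * t.2.2.1 + t.2.1 * t.2.2.2 = n)

theorem mem_Quad (n a b x y : ℕ) :
    (a, b, x, y) ∈ Quad n ↔ 0 < a ∧ 0 < b ∧ 0 < x ∧ 0 < y ∧ a * x + b * y = n := by
  unfold Quad
  simp only [mem_filter, mem_product, mem_Icc]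
  constructor
  · rintro ⟨⟨h1, h2, h3, h4⟩, h⟩
    exact ⟨h1.1, h2.1, h3.1, h4.1, h⟩
  · rintro ⟨h1, h2, h3, h4, h⟩
    have e1 : a ≤ a * x := Nat.le_mul_of_pos_right _ h3
    have e2 : x ≤ a * x := Nat.le_mul_of_pos_left _ h1
    have e3 : b ≤ b * y := Nat.le_mul_of_pos_right _ h4
    have e4 : y ≤ b * y := Nat.le_mul_of_pos_left _ h2
    refine ⟨⟨⟨h1, ?_⟩, ⟨h2, ?_⟩, ⟨h3, ?_⟩, ⟨h4, ?_⟩⟩, h⟩ <;> omega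

/-- number of quadruples with a property -/
def cnt (n : ℕ) (P : ℕ → ℕ → ℕ → ℕ → Prop) [∀ a b x y, Decidable (P a b x y)] : ℕ :=
  ((Quad n).filter (fun t => P t.1 t.2.1 t.2.2.1 t.2.2.2)).card

theorem cnt_bij (n : ℕ) (P Q : ℕ → ℕ → ℕ → ℕ → Prop)
    [∀ a b x y, Decidable (P a b x y)] [∀ a b x y, Decidable (Q a b x y)]
    (f g : ℕ × ℕ × ℕ × ℕ → ℕ × ℕ × ℕ × ℕ)
    (hf : ∀ a b x y, 0 < a → 0 < b → 0 < x → 0 < y → a * x + b * y = n → P a b x y →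
      (f (a, b, x, y) ∈ Quad n ∧ Q (f (a, b, x, y)).1 (f (a, b, x, y)).2.1 (f (a, b, x, y)).2.2.1
        (f (a, b, x, y)).2.2.2) ∧ g (f (a, b, x, y)) = (a, b, x, y))
    (hg : ∀ a b x y, 0 < a → 0 < b → 0 < x → 0 < y → a * x + b * y = n → Q a b x y →
      (g (a, b, x, y) ∈ Quad n ∧ P (g (a, b, x, y)).1 (g (a, b, x, y)).2.1 (g (a, b, x, y)).2.2.1
        (g (a, b, x, y)).2.2.2) ∧ f (g (a, b, x, y)) = (a, b, x, y)) :
    cnt n P = cnt n Q := by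
  apply card_bij' (fun t _ => f t) (fun t _ => g t)
  · rintro ⟨a, b, x, y⟩ ht
    rw [mem_filter, mem_Quad] at ht
    obtain ⟨⟨h1, h2, h3, h4, h5⟩, h6⟩ := ht
    rw [mem_filter]; exact (hf a b x y h1 h2 h3 h4 h5 h6).1
  · rintro ⟨a, b, x, y⟩ ht
    rw [mem_filter, mem_Quad] at ht
    obtain ⟨⟨h1, h2, h3, h4, h5⟩, h6⟩ := ht
    rw [mem_filter]; exact (hg a b x y h1 h2 h3 h4 h5 h6).1
  · rintro ⟨a, b, x, y⟩ ht
    rw [mem_filter, mem_Quad] at ht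
    obtain ⟨⟨h1, h2, h3, h4, h5⟩, h6⟩ := ht
    exact (hf a b x y h1 h2 h3 h4 h5 h6).2
  · rintro ⟨a, b, x, y⟩ ht
    rw [mem_filter, mem_Quad] at ht
    obtain ⟨⟨h1, h2, h3, h4, h5⟩, h6⟩ := ht
    exact (hg a b x y h1 h2 h3 h4 h5 h6).2

theorem cnt_split (n : ℕ) (P Q1 Q2 Q3 : ℕ → ℕ → ℕ → ℕ → Prop)
    [∀ a b x y, Decidable (P a b x y)] [∀ a b x y, Decidable (Q1 a b x y)]
    [∀ a b x y, Decidable (Q2 a b x y)] [∀ a b x y, Decidable (Q3 a b x y)]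
    (h : ∀ a b x y, (P a b x y ↔ Q1 a b x y ∨ Q2 a b x y ∨ Q3 a b x y) ∧
      ¬ (Q1 a b x y ∧ Q2 a b x y) ∧ ¬ (Q1 a b x y ∧ Q3 a b x y) ∧ ¬ (Q2 a b x y ∧ Q3 a b x y)) :
    cnt n P = cnt n Q1 + cnt n Q2 + cnt n Q3 := by
  unfold cnt
  rw [← card_union_of_disjoint, ← card_union_of_disjoint]
  · congr 1
    ext ⟨a, b, x, y⟩
    have := (h a b x y).1
    simp only [mem_filter, mem_union]
    tauto
  · rw [disjoint_left]
    rintro ⟨a, b, x, y⟩ h1 h2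
    have := (h a b x y).2
    simp only [mem_filter, mem_union] at h1 h2
    tauto
  · rw [disjoint_left]
    rintro ⟨a, b, x, y⟩ h1 h2
    have := (h a b x y).2
    simp only [mem_filter] at h1 h2
    tauto

theorem cnt_zero (n : ℕ) (P : ℕ → ℕ → ℕ → ℕ → Prop) [∀ a b x y, Decidable (P a b x y)]
    (h : ∀ a b x y, a * x + b * y = n → ¬ P a b x y) : cnt n P = 0 := by
  unfold cnt
  rw [card_eq_zero, filter_eq_empty_iff]
  rintro ⟨a, b, x, y⟩ ht
  rw [mem_Quad] at ht
  exact h a b x y ht.2.2.2.2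

theorem swap_quad (n a b x y : ℕ) (h1 : 0 < a) (h2 : 0 < b) (h3 : 0 < x) (h4 : 0 < y)
    (h : a * x + b * y = n) : (b, a, y, x) ∈ Quad n := by
  rw [mem_Quad]; exact ⟨h2, h1, h4, h3, by linarith⟩

theorem liouville (n : ℕ) (hn : n % 3 ≠ 0) :
    (cnt n (fun a b _ _ => a % 3 = b % 3) : ℤ) - cnt n (fun a b _ _ => (a + b) % 3 = 0) =
    cnt n (fun a b _ _ => a = b) - 2 * cnt n (fun a _ x y => a % 3 = 0 ∧ x = y) := by
  have e1 := cnt_split n (fun a b _ _ => a % 3 = b % 3) (fun a b _ _ => a = b)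
    (fun a b _ _ => b < a ∧ a % 3 = b % 3) (fun a b _ _ => a < b ∧ a % 3 = b % 3)
    (by intro a b x y; omega)
  have e2 := cnt_bij n (fun a b _ _ => a < b ∧ a % 3 = b % 3)
    (fun a b _ _ => b < a ∧ a % 3 = b % 3)
    (fun t => (t.2.1, t.1, t.2.2.2, t.2.2.1)) (fun t => (t.2.1, t.1, t.2.2.2, t.2.2.1))
    (fun a b x y h1 h2 h3 h4 h5 h6 => ⟨⟨swap_quad n a b x y h1 h2 h3 h4 h5, by
      simp only; omega⟩, rfl⟩)
    (fun a b x y h1 h2 h3 h4 h5 h6 => ⟨⟨swap_quad n a b x y h1 h2 h3 h4 h5, by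
      simp only; omega⟩, rfl⟩)
  have e3 := cnt_bij n (fun a b _ _ => b < a ∧ a % 3 = b % 3)
    (fun a _ x y => a % 3 = 0 ∧ x < y)
    (fun t => (t.1 - t.2.1, t.2.1, t.2.2.1, t.2.2.1 + t.2.2.2))
    (fun t => (t.1 + t.2.1, t.2.1, t.2.2.1, t.2.2.2 - t.2.2.1))
    (by
      rintro a b x y h1 h2 h3 h4 h5 ⟨h6, h7⟩
      obtain ⟨c, rfl⟩ := Nat.exists_eq_add_of_lt h6
      simp only [mem_Quad, Prod.mk.injEq]
      refine ⟨⟨⟨by omega, by omega, by omega, by omega, ?_⟩, by omega, by omega⟩, by omega,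
        by trivial, by trivial, by omega⟩
      rw [show b + c + 1 - b = c + 1 by omega, ← h5]; ring)
    (by
      rintro a b x y h1 h2 h3 h4 h5 ⟨h6, h7⟩
      obtain ⟨c, rfl⟩ := Nat.exists_eq_add_of_lt h7
      simp only [mem_Quad, Prod.mk.injEq]
      refine ⟨⟨⟨by omega, by omega, by omega, by omega, ?_⟩, by omega, by omega⟩, by omega,
        by trivial, by trivial, by omega⟩
      rw [show x + c + 1 - x = c + 1 by omega, ← h5]; ring)
  have f1 := cnt_split n (fun a b _ _ => (a + b) % 3 = 0)
    (fun a b x y => x = y ∧ (a + b) % 3 = 0)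
    (fun a b x y => y < x ∧ (a + b) % 3 = 0) (fun a b x y => x < y ∧ (a + b) % 3 = 0)
    (by intro a b x y; omega)
  have f0 := cnt_zero n (fun a b x y => x = y ∧ (a + b) % 3 = 0) (by
    rintro a b x y h ⟨rfl, h'⟩
    rw [← add_mul] at h
    rw [← h, Nat.mul_mod, h'] at hn
    simp at hn)
  have f2 := cnt_bij n (fun a b x y => x < y ∧ (a + b) % 3 = 0)
    (fun a b x y => y < x ∧ (a + b) % 3 = 0)
    (fun t => (t.2.1, t.1, t.2.2.2, t.2.2.1)) (fun t => (t.2.1, t.1, t.2.2.2, t.2.2.1))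
    (fun a b x y h1 h2 h3 h4 h5 h6 => ⟨⟨swap_quad n a b x y h1 h2 h3 h4 h5, by
      simp only; omega⟩, rfl⟩)
    (fun a b x y h1 h2 h3 h4 h5 h6 => ⟨⟨swap_quad n a b x y h1 h2 h3 h4 h5, by
      simp only; omega⟩, rfl⟩)
  have f3 := cnt_bij n (fun a b x y => y < x ∧ (a + b) % 3 = 0)
    (fun a b _ _ => a % 3 = 0 ∧ b < a)
    (fun t => (t.1 + t.2.1, t.1, t.2.2.2, t.2.2.1 - t.2.2.2))
    (fun t => (t.2.1, t.1 - t.2.1, t.2.2.1 + t.2.2.2, t.2.2.1))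
    (by
      rintro a b x y h1 h2 h3 h4 h5 ⟨h6, h7⟩
      obtain ⟨c, rfl⟩ := Nat.exists_eq_add_of_lt h6
      simp only [mem_Quad, Prod.mk.injEq]
      refine ⟨⟨⟨by omega, by omega, by omega, by omega, ?_⟩, by omega, by omega⟩, by trivial,
        by omega, by omega, by trivial⟩
      rw [show y + c + 1 - y = c + 1 by omega, ← h5]; ring)
    (by
      rintro a b x y h1 h2 h3 h4 h5 ⟨h6, h7⟩
      obtain ⟨c, rfl⟩ := Nat.exists_eq_add_of_lt h7
      simp only [mem_Quad, Prod.mk.injEq]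
      refine ⟨⟨⟨by omega, by omega, by omega, by omega, ?_⟩, by omega, by omega⟩, by omega,
        by trivial, by trivial, by omega⟩
      rw [show b + c + 1 - b = c + 1 by omega, ← h5]; ring)
  have g1 := cnt_split n (fun a _ _ _ => a % 3 = 0)
    (fun a _ x y => a % 3 = 0 ∧ x = y) (fun a _ x y => a % 3 = 0 ∧ x < y)
    (fun a _ x y => a % 3 = 0 ∧ y < x) (by intro a b x y; omega)
  have g2 := cnt_split n (fun a _ _ _ => a % 3 = 0)
    (fun a b _ _ => a % 3 = 0 ∧ a = b) (fun a b _ _ => a % 3 = 0 ∧ b < a)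
    (fun a b _ _ => a % 3 = 0 ∧ a < b) (by intro a b x y; omega)
  have g0 := cnt_zero n (fun a b _ _ => a % 3 = 0 ∧ a = b) (by
    rintro a b x y h ⟨h', rfl⟩
    rw [← mul_add] at h
    rw [← h, Nat.mul_mod, h'] at hn
    simp at hn)
  have g3 := cnt_bij n (fun a _ x y => a % 3 = 0 ∧ y < x) (fun a b _ _ => a % 3 = 0 ∧ a < b)
    (fun t => (t.1, t.1 + t.2.1, t.2.2.1 - t.2.2.2, t.2.2.2))
    (fun t => (t.1, t.2.1 - t.1, t.2.2.1 + t.2.2.2, t.2.2.2))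
    (by
      rintro a b x y h1 h2 h3 h4 h5 ⟨h6, h7⟩
      obtain ⟨c, rfl⟩ := Nat.exists_eq_add_of_lt h7
      simp only [mem_Quad, Prod.mk.injEq]
      refine ⟨⟨⟨by omega, by omega, by omega, by omega, ?_⟩, by omega, by omega⟩, by trivial,
        by omega, by omega, by trivial⟩
      rw [show y + c + 1 - y = c + 1 by omega, ← h5]; ring)
    (by
      rintro a b x y h1 h2 h3 h4 h5 ⟨h6, h7⟩
      obtain ⟨c, rfl⟩ := Nat.exists_eq_add_of_lt h7
      simp only [mem_Quad, Prod.mk.injEq]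
      refine ⟨⟨⟨by omega, by omega, by omega, by omega, ?_⟩, by omega, by omega⟩, by trivial,
        by omega, by omega, by trivial⟩
      rw [show a + c + 1 - a = c + 1 by omega, ← h5]; ring)
  omega

theorem cnt_diag (n : ℕ) (hn : n ≠ 0) :
    cnt n (fun a b _ _ => a = b) = ∑ d ∈ n.divisors, (d - 1) := by
  have : ∑ d ∈ n.divisors, (d - 1) = (n.divisors.sigma (fun d => Ico 1 d)).card := by
    rw [card_sigma]; simp
  rw [this]
  apply card_bij' (fun t _ => (⟨t.2.2.1 + t.2.2.2, t.2.2.1⟩ : (_ : ℕ) × ℕ))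
    (fun s _ => (n / s.1, n / s.1, s.2, s.1 - s.2))
  · rintro ⟨a, b, x, y⟩ ht
    rw [mem_filter, mem_Quad] at ht
    obtain ⟨⟨h1, h2, h3, h4, h5⟩, h6⟩ := ht
    simp only at h6
    subst h6
    simp only [mem_sigma, Nat.mem_divisors, mem_Ico]
    exact ⟨⟨⟨a, by rw [← h5]; ring⟩, hn⟩, by omega, by omega⟩
  · rintro ⟨d, x⟩ hs
    simp only [mem_sigma, Nat.mem_divisors, mem_Ico] at hs
    obtain ⟨⟨⟨e, he⟩, _⟩, h1, h2⟩ := hs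
    have hd : 0 < d := by omega
    have he0 : 0 < e := by
      rcases Nat.eq_zero_or_pos e with h | h
      · subst h; simp at he; omega
      · exact h
    have : n / d = e := by rw [he]; exact Nat.mul_div_cancel_left _ hd
    simp only [this]
    rw [mem_filter, mem_Quad]
    refine ⟨⟨he0, he0, by omega, by omega, ?_⟩, rfl⟩
    rw [← mul_add, he, show x + (d - x) = d by omega, mul_comm]
  · rintro ⟨a, b, x, y⟩ ht
    rw [mem_filter, mem_Quad] at ht
    obtain ⟨⟨h1, h2, h3, h4, h5⟩, h6⟩ := ht
    simp only at h6
    subst h6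
    have : n / (x + y) = a := by
      rw [← h5, ← mul_add]; exact Nat.mul_div_cancel _ (by omega)
    simp only [this, Prod.mk.injEq, true_and]
    omega
  · rintro ⟨d, x⟩ hs
    simp only [mem_sigma, Nat.mem_divisors, mem_Ico] at hs
    obtain ⟨_, h1, h2⟩ := hs
    simp only
    rw [show x + (d - x) = d by omega]

theorem card_mult3 (d : ℕ) : ((Ico 1 d).filter (fun c => c % 3 = 0)).card = (d - 1) / 3 := by
  induction d with
  | zero => simp
  | succ d ih =>
    rcases Nat.eq_zero_or_pos d with h | h
    · subst h; simp
    · rw [← insert_Ico_right_eq_Ico_add_one h, filter_insert]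
      split_ifs with h3
      · rw [card_insert_of_notMem (by simp), ih]; omega
      · rw [ih]; omega

theorem cnt_diag2 (n : ℕ) (hn : n ≠ 0) :
    cnt n (fun a _ x y => a % 3 = 0 ∧ x = y) = ∑ d ∈ n.divisors, ((d - 1) / 3) := by
  have : ∑ d ∈ n.divisors, ((d - 1) / 3) =
      (n.divisors.sigma (fun d => (Ico 1 d).filter (fun c => c % 3 = 0))).card := by
    rw [card_sigma]; simp only [card_mult3]
  rw [this]
  apply card_bij' (fun t _ => (⟨t.1 + t.2.1, t.1⟩ : (_ : ℕ) × ℕ))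
    (fun s _ => (s.2, s.1 - s.2, n / s.1, n / s.1))
  · rintro ⟨a, b, x, y⟩ ht
    rw [mem_filter, mem_Quad] at ht
    obtain ⟨⟨h1, h2, h3, h4, h5⟩, h6, h7⟩ := ht
    simp only at h6 h7
    subst h7
    simp only [mem_sigma, Nat.mem_divisors, mem_Ico, mem_filter]
    exact ⟨⟨⟨x, by rw [← h5]; ring⟩, hn⟩, by omega, by omega⟩
  · rintro ⟨d, x⟩ hs
    simp only [mem_sigma, Nat.mem_divisors, mem_Ico, mem_filter] at hs
    obtain ⟨⟨⟨e, he⟩, _⟩, ⟨h1, h2⟩, h3⟩ := hs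
    have hd : 0 < d := by omega
    have he0 : 0 < e := by
      rcases Nat.eq_zero_or_pos e with h | h
      · subst h; simp at he; omega
      · exact h
    have : n / d = e := by rw [he]; exact Nat.mul_div_cancel_left _ hd
    simp only [this]
    rw [mem_filter, mem_Quad]
    refine ⟨⟨by omega, by omega, he0, he0, ?_⟩, h3, rfl⟩
    rw [← add_mul, he, show x + (d - x) = d by omega]
  · rintro ⟨a, b, x, y⟩ ht
    rw [mem_filter, mem_Quad] at ht
    obtain ⟨⟨h1, h2, h3, h4, h5⟩, h6, h7⟩ := ht
    simp only at h6 h7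
    subst h7
    have : n / (a + b) = x := by
      rw [← h5, ← add_mul]; exact Nat.mul_div_cancel_left _ (by omega)
    simp only [this, Prod.mk.injEq, true_and, and_true]
    omega
  · rintro ⟨d, x⟩ hs
    simp only [mem_sigma, Nat.mem_divisors, mem_Ico, mem_filter] at hs
    obtain ⟨_, ⟨h1, h2⟩, _⟩ := hs
    simp only
    rw [show x + (d - x) = d by omega]

theorem conv (n : ℕ) : ∑ ij ∈ antidiagonal n, D ij.1 * D ij.2 =
    ∑ t ∈ Quad n, chi t.1 * chi t.2.1 := by
  simp only [D, sum_mul_sum, ← sum_product']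
  rw [sum_sigma']
  apply sum_bij' (fun s _ => (s.2.1, s.2.2, s.1.1 / s.2.1, s.1.2 / s.2.2))
    (fun t _ => (⟨(t.1 * t.2.2.1, t.2.1 * t.2.2.2), (t.1, t.2.1)⟩ : (_ : ℕ × ℕ) × (ℕ × ℕ)))
  · rintro ⟨⟨i, j⟩, a, b⟩ hs
    simp only [mem_sigma, Finset.HasAntidiagonal.mem_antidiagonal, mem_product, Nat.mem_divisors] at hs
    obtain ⟨h, ⟨ha, hi⟩, hb, hj⟩ := hs
    rw [mem_Quad]
    have ha0 := Nat.pos_of_dvd_of_pos ha (Nat.pos_of_ne_zero hi)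
    have hb0 := Nat.pos_of_dvd_of_pos hb (Nat.pos_of_ne_zero hj)
    refine ⟨ha0, hb0, Nat.div_pos (Nat.le_of_dvd (Nat.pos_of_ne_zero hi) ha) ha0,
      Nat.div_pos (Nat.le_of_dvd (Nat.pos_of_ne_zero hj) hb) hb0, ?_⟩
    rw [Nat.mul_div_cancel' ha, Nat.mul_div_cancel' hb, h]
  · rintro ⟨a, b, x, y⟩ ht
    rw [mem_Quad] at ht
    obtain ⟨h1, h2, h3, h4, h5⟩ := ht
    simp only [mem_sigma, Finset.HasAntidiagonal.mem_antidiagonal, mem_product, Nat.mem_divisors]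
    exact ⟨h5, ⟨Dvd.intro _ rfl, (Nat.mul_pos h1 h3).ne'⟩, Dvd.intro _ rfl,
      (Nat.mul_pos h2 h4).ne'⟩
  · rintro ⟨⟨i, j⟩, a, b⟩ hs
    simp only [mem_sigma, Finset.HasAntidiagonal.mem_antidiagonal, mem_product, Nat.mem_divisors] at hs
    obtain ⟨h, ⟨ha, hi⟩, hb, hj⟩ := hs
    simp only [Nat.mul_div_cancel' ha, Nat.mul_div_cancel' hb]
  · rintro ⟨a, b, x, y⟩ ht
    rw [mem_Quad] at ht
    obtain ⟨h1, h2, h3, h4, h5⟩ := ht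
    simp only [Nat.mul_div_cancel_left _ h1, Nat.mul_div_cancel_left _ h2]
  · intros; rfl

theorem chi_chi (a b : ℕ) : chi a * chi b =
    (if a % 3 = b % 3 then 1 else 0) - (if (a + b) % 3 = 0 then 1 else 0) := by
  unfold chi
  rw [Nat.add_mod]
  have ha : a % 3 = 0 ∨ a % 3 = 1 ∨ a % 3 = 2 := by omega
  have hb : b % 3 = 0 ∨ b % 3 = 1 ∨ b % 3 = 2 := by omega
  rcases ha with h | h | h <;> rcases hb with h' | h' | h' <;> simp [h, h']

theorem quad_sum (n : ℕ) : ∑ t ∈ Quad n, chi t.1 * chi t.2.1 =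
    (cnt n (fun a b _ _ => a % 3 = b % 3) : ℤ) - cnt n (fun a b _ _ => (a + b) % 3 = 0) := by
  simp only [chi_chi, sum_sub_distrib, cnt, card_filter]
  push_cast
  rfl

theorem D_two (n : ℕ) (hn : n % 3 = 2) : D n = 0 := by
  have h := Nat.sum_div_divisors n chi
  have h2 : ∑ d ∈ n.divisors, chi (n / d) = - ∑ d ∈ n.divisors, chi d := by
    rw [← sum_neg_distrib]
    apply sum_congr rfl
    intro d hd
    have e : d * (n / d) = n := Nat.mul_div_cancel' (Nat.dvd_of_mem_divisors hd)
    have : chi d * chi (n / d) = -1 := by rw [← chi_mul, e, chi_two hn]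
    unfold chi at *
    split_ifs at * <;> simp_all
  unfold D
  linarith

theorem conv_eq (n : ℕ) (hn : n % 3 = 2) :
    3 * ∑ ij ∈ antidiagonal n, D ij.1 * D ij.2 = ∑ d ∈ n.divisors, (d : ℤ) := by
  rw [conv, quad_sum, liouville n (by omega), cnt_diag n (by omega), cnt_diag2 n (by omega)]
  have hD := D_two n hn
  unfold D at hD
  have : ∑ d ∈ n.divisors, (d : ℤ) = ∑ d ∈ n.divisors, ((d : ℤ) - chi d) := by
    rw [sum_sub_distrib, hD]; ring
  rw [this]
  push_cast
  rw [mul_sum, ← sum_sub_distrib, mul_sum]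
  apply sum_congr rfl
  intro d hd
  have hdn := Nat.dvd_of_mem_divisors hd
  have h3 : d % 3 ≠ 0 := by
    intro h
    have := (Nat.dvd_of_mod_eq_zero h).trans hdn
    omega
  have h0 : 0 < d := by omega
  have h12 : d % 3 = 1 ∨ d % 3 = 2 := by omega
  rcases h12 with h | h
  · rw [chi_one h]; omega
  · rw [chi_two h]; omega

theorem conv_A3 (n : ℕ) : (A3 n : ℤ) = ∑ ij ∈ antidiagonal (3 * n + 2), D ij.1 * D ij.2 := by
  rw [A3_eq]
  push_cast
  simp only [Qs_card]
  apply sum_bij_ne_zero (fun ij _ _ => (3 * ij.1 + 1, 3 * ij.2 + 1))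
  · rintro ⟨i, j⟩ h _
    rw [Finset.HasAntidiagonal.mem_antidiagonal] at h ⊢
    simp only at h ⊢
    omega
  · rintro ⟨i, j⟩ _ _ ⟨i', j'⟩ _ _ h
    simp only [Prod.mk.injEq] at h ⊢
    omega
  · rintro ⟨i, j⟩ h hne
    rw [Finset.HasAntidiagonal.mem_antidiagonal] at h
    simp only at h hne
    have hi : i % 3 ≠ 2 := fun h2 => hne (by rw [D_two i h2, zero_mul])
    have hj : j % 3 ≠ 2 := fun h2 => hne (by rw [D_two j h2, mul_zero])
    have ei : 3 * (i / 3) + 1 = i := by omega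
    have ej : 3 * (j / 3) + 1 = j := by omega
    refine ⟨(i / 3, j / 3), ?_, ?_, ?_⟩
    · rw [Finset.HasAntidiagonal.mem_antidiagonal]; simp only; omega
    · simp only [ei, ej]; exact hne
    · simp only [ei, ej]
  · intros; rfl

theorem A3_sigma (n : ℕ) : 3 * (A3 n : ℤ) = ∑ d ∈ (3 * n + 2).divisors, (d : ℤ) := by
  rw [conv_A3, conv_eq _ (by omega)]

theorem sig_pow (p a M : ℕ) (hp : p.Prime) (hM : ¬ p ∣ M) :
    ((p : ℤ) - 1) * ∑ d ∈ (p ^ a * M).divisors, (d : ℤ) =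
    ((p : ℤ) ^ (a + 1) - 1) * ∑ d ∈ M.divisors, (d : ℤ) := by
  have hc : Nat.Coprime (p ^ a) M := ((Nat.Prime.coprime_iff_not_dvd hp).2 hM).pow_left a
  have h1 := Nat.Coprime.sum_divisors_mul hc
  have h2 : (p - 1 : ℤ) * ∑ d ∈ (p ^ a).divisors, (d : ℤ) = (p : ℤ) ^ (a + 1) - 1 := by
    rw [Nat.sum_divisors_prime_pow hp]
    push_cast
    rw [mul_comm]; exact geom_sum_mul _ _
  zify at h1
  rw [h1, ← h2]; ring

theorem sig_rec (p k N : ℕ) (hp : p.Prime) (hN : N ≠ 0) :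
    ((p : ℤ) - 1) * ∑ d ∈ (p ^ k * N).divisors, (d : ℤ) +
      ((p : ℤ) ^ k - p) * ∑ d ∈ N.divisors, (d : ℤ) =
    ((p : ℤ) ^ k - 1) * ∑ d ∈ (p * N).divisors, (d : ℤ) := by
  obtain ⟨a, M, hM, rfl⟩ := Nat.exists_eq_pow_mul_and_not_dvd hN p hp.ne_one
  have e1 := sig_pow p (k + a) M hp hM
  have e2 := sig_pow p a M hp hM
  have e3 := sig_pow p (1 + a) M hp hM
  rw [show p ^ k * (p ^ a * M) = p ^ (k + a) * M by ring,
    show p * (p ^ a * M) = p ^ (1 + a) * M by ring]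
  have hp1 : (p : ℤ) - 1 ≠ 0 := by
    have := hp.two_le
    omega
  apply mul_left_cancel₀ hp1
  linear_combination ((p : ℤ) - 1) * e1 + ((p : ℤ) ^ k - p) * e2 - ((p : ℤ) ^ k - 1) * e3

end TC

/-- For a prime p ≡ 1 (mod 3) and k, n ≥ 0:
(p−1)·A₃(pᵏn + (2pᵏ−2)/3) + (pᵏ−p)·A₃(n) = (pᵏ−1)·A₃(pn + (2p−2)/3). -/
theorem A3_rec_one_mod_three (p k n : ℕ) (hp : p.Prime) (hp3 : p % 3 = 1) :
    ((p : ℤ) - 1) * A3 (p ^ k * n + (2 * p ^ k - 2) / 3) +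
      ((p : ℤ) ^ k - p) * A3 n =
    ((p : ℤ) ^ k - 1) * A3 (p * n + (2 * p - 2) / 3) := by
  have hmod : ∀ k, p ^ k % 3 = 1 := by
    intro k
    rw [Nat.pow_mod, hp3]; simp
  have hkey : ∀ q, q % 3 = 1 → 3 * (q * n + (2 * q - 2) / 3) + 2 = q * (3 * n + 2) := by
    intro q hq
    have : 3 * ((2 * q - 2) / 3) + 2 = 2 * q := by omega
    linear_combination this
  have h1 := TC.A3_sigma (p ^ k * n + (2 * p ^ k - 2) / 3)
  have h2 := TC.A3_sigma n
  have h3 := TC.A3_sigma (p * n + (2 * p - 2) / 3)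
  rw [hkey _ (hmod k)] at h1
  rw [hkey _ hp3] at h3
  have h := TC.sig_rec p k (3 * n + 2) hp (by omega)
  rw [← h1, ← h2, ← h3] at h
  linarith
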